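/- Let S and A be nonempty finite sets, let q : S × A × S → ℝ satisfy q(s'|a,s) ≥ 0 and ∑_{s'∈S} q(s'|a,s) = 1 for all s, a, let r : S × A → ℝ, let μ : S → ℝ with μ(s) > 0 for all s, and let γ ∈ [0,1). Define T[V](s) := μ(s)·ln(∑_{a∈A} exp((r(s,a) + γ·∑_{s'∈S} q(s'|a,s)·V(s'))/μ(s))), and let V* be the unique fixed point of T. Then for every initial V₀ : S → ℝ, the value-iteration sequence V_{n+1} := T[V_n] converges to V* in the supremum norm: max_{s∈S} |V_n(s) − V*(s)| → 0 as n → ∞; moreover max_s |V_n(s) − V*(s)| ≤ γⁿ·max_s |V₀(s) − V*(s)|. -/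

import Mathlib

open Finset Filter

/-!
The weighted log-sum-exp `x ↦ m * log (∑ a, exp (x a / m))` is monotone and commutes with adding
a constant. Averaging against the stochastic kernel `q` has the same two properties, so the soft
Bellman operator turns a uniform bound `V ≤ W + d` into `T V ≤ T W + γ * d`
(`soft_bellman_le_add`). Applied in both directions this makes `T` a `γ`-contraction for the
supremum norm, and the geometric bound follows by induction on the number of iterations, one of
the two arguments being the fixed point.
-/

lemma weighted_logSumExp_le_add {A : Type*} [Fintype A] [Nonempty A] {m c : ℝ} (hm : 0 < m)
    {x y : A → ℝ} (h : ∀ a, x a ≤ y a + c) :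
    m * Real.log (∑ a, Real.exp (x a / m)) ≤ m * Real.log (∑ a, Real.exp (y a / m)) + c := by
  have pos : ∀ z : A → ℝ, 0 < ∑ a, Real.exp (z a / m) := fun z =>
    Finset.sum_pos (fun a _ => Real.exp_pos _) Finset.univ_nonempty
  have hsum : ∑ a, Real.exp (x a / m) ≤ (∑ a, Real.exp (y a / m)) * Real.exp (c / m) := by
    rw [Finset.sum_mul]
    refine Finset.sum_le_sum fun a _ => ?_
    rw [← Real.exp_add, ← add_div]
    exact Real.exp_le_exp.2 (div_le_div_of_nonneg_right (h a) hm.le)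
  have hlog := Real.log_le_log (pos x) hsum
  rw [Real.log_mul (pos y).ne' (Real.exp_pos _).ne', Real.log_exp] at hlog
  calc m * Real.log (∑ a, Real.exp (x a / m))
      ≤ m * (Real.log (∑ a, Real.exp (y a / m)) + c / m) :=
        mul_le_mul_of_nonneg_left hlog hm.le
    _ = m * Real.log (∑ a, Real.exp (y a / m)) + c := by
        field_simp

/-- One-sided contraction of the soft Bellman operator at a single state, with reward vector `r`,
transition kernel `q` and entropy weight `m` of that state. -/
lemma soft_bellman_le_add {S A : Type*} [Fintype S] [Fintype A] [Nonempty A]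
    {q : A → S → ℝ} (hq0 : ∀ a s', 0 ≤ q a s') (hq1 : ∀ a, ∑ s', q a s' = 1)
    (r : A → ℝ) {m γ d : ℝ} (hm : 0 < m) (hγ0 : 0 ≤ γ) {V W : S → ℝ} (h : ∀ s, V s ≤ W s + d) :
    m * Real.log (∑ a, Real.exp ((r a + γ * ∑ s', q a s' * V s') / m)) ≤
      m * Real.log (∑ a, Real.exp ((r a + γ * ∑ s', q a s' * W s') / m)) + γ * d := by
  refine weighted_logSumExp_le_add hm fun a => ?_
  have havg : ∑ s', q a s' * V s' ≤ ∑ s', q a s' * W s' + d :=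
    calc ∑ s', q a s' * V s' ≤ ∑ s', q a s' * (W s' + d) :=
          Finset.sum_le_sum fun s' _ => mul_le_mul_of_nonneg_left (h s') (hq0 a s')
      _ = ∑ s', q a s' * W s' + d := by
          simp only [mul_add, Finset.sum_add_distrib, ← Finset.sum_mul, hq1, one_mul]
  linarith [mul_le_mul_of_nonneg_left havg hγ0]

/-- Value iteration converges: if `V*` is the fixed point of the weighted soft Bellman
operator `T` and `V_{n+1} = T[V_n]`, then `max_s |V_n(s) − V*(s)| → 0`, with the
geometric rate `max_s |V_n(s) − V*(s)| ≤ γⁿ·max_s |V₀(s) − V*(s)|`. Here `q s a s'`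
denotes the transition probability `q(s'|a,s)`. -/
theorem weighted_soft_value_iteration_converges
    {S A : Type*} [Fintype S] [Nonempty S] [Fintype A] [Nonempty A]
    (q : S → A → S → ℝ) (hq0 : ∀ s a s', 0 ≤ q s a s')
    (hq1 : ∀ s a, ∑ s' : S, q s a s' = 1)
    (r : S → A → ℝ) (μ : S → ℝ) (hμ : ∀ s, 0 < μ s)
    (γ : ℝ) (hγ0 : 0 ≤ γ) (hγ1 : γ < 1)
    (T : (S → ℝ) → S → ℝ)
    (hT : ∀ V s, T V s =
      μ s * Real.log (∑ a : A, Real.exp ((r s a + γ * ∑ s' : S, q s a s' * V s') / μ s)))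
    (Vstar : S → ℝ) (hfix : T Vstar = Vstar)
    (V₀ : S → ℝ) (Vseq : ℕ → S → ℝ)
    (hV0 : Vseq 0 = V₀) (hVsucc : ∀ n, Vseq (n + 1) = T (Vseq n)) :
    Tendsto (fun n : ℕ =>
        Finset.univ.sup' Finset.univ_nonempty (fun s : S => |Vseq n s - Vstar s|))
      atTop (nhds 0)
    ∧ ∀ n : ℕ,
        Finset.univ.sup' Finset.univ_nonempty (fun s : S => |Vseq n s - Vstar s|)
          ≤ γ ^ n * Finset.univ.sup' Finset.univ_nonempty (fun s : S => |V₀ s - Vstar s|) := by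
  set D := Finset.univ.sup' Finset.univ_nonempty (fun s : S => |V₀ s - Vstar s|) with hD
  have hpt : ∀ n s, |Vseq n s - Vstar s| ≤ γ ^ n * D := by
    intro n
    induction n with
    | zero =>
      intro s
      rw [hV0, pow_zero, one_mul, hD]
      exact Finset.le_sup' (fun s : S => |V₀ s - Vstar s|) (Finset.mem_univ s)
    | succ n ih =>
      intro s
      have h₁ := soft_bellman_le_add (hq0 s) (hq1 s) (r s) (hμ s) hγ0 (V := Vseq n) (W := Vstar)
        (d := γ ^ n * D) fun s' => by linarith [(abs_le.1 (ih s')).2]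
      have h₂ := soft_bellman_le_add (hq0 s) (hq1 s) (r s) (hμ s) hγ0 (V := Vstar) (W := Vseq n)
        (d := γ ^ n * D) fun s' => by linarith [(abs_le.1 (ih s')).1]
      rw [← hT, ← hT, hfix, ← hVsucc] at h₁ h₂
      rw [pow_succ', mul_assoc]
      exact abs_le.2 ⟨by linarith, by linarith⟩
  have hbound : ∀ n : ℕ, Finset.univ.sup' Finset.univ_nonempty
      (fun s : S => |Vseq n s - Vstar s|) ≤ γ ^ n * D :=
    fun n => Finset.sup'_le _ _ fun s _ => hpt n s
  refine ⟨squeeze_zero (fun n => ?_) hbound ?_, hbound⟩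
  · obtain ⟨s⟩ := ‹Nonempty S›
    exact (abs_nonneg _).trans
      (Finset.le_sup' (fun s : S => |Vseq n s - Vstar s|) (Finset.mem_univ s))
  · simpa using (tendsto_pow_atTop_nhds_zero_of_lt_one hγ0 hγ1).mul_const D
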